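/- arXiv:2111.01997 — 2 statements merged into one kernel-verified Lean document; each statement's English description precedes it below -/
import Mathlib

section
/- There exists a constant C > 0 such that for every n ≥ 1 and every ε with 0 < ε < 1, there is a deterministic nonadaptive ε-sampler (Q, g) for the class of permutation branching programs of length n, arbitrary width, and a single accept state, whose query complexity satisfies |Q| ≤ (n/ε)^C. That is, |Q| ≤ (n/ε)^C, g(f) depends only on the restriction of f to Q, and for every w ∈ ℕ and every permutation branching program B of length n and width w with exactly one accept state, |g(B) − Pr[B(U_n)=1]| ≤ ε. -/
/-- An ordered branching program of length `n` and width `w`: a start state,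
a transition function for each layer, and a set of accept states. -/
structure OBP (n w : ℕ) where
  start : Fin w
  trans : ℕ → Fin w → Bool → Fin w
  accept : Finset (Fin w)

namespace OBP

variable {n w : ℕ}

/-- The state reached from state `v` in layer `i` by walking along the bits of `z`. -/
def walk (B : OBP n w) : ℕ → Fin w → List Bool → Fin w
  | _, v, [] => v
  | i, v, b :: z => B.walk (i + 1) (B.trans i v b) z

/-- `B.eval x = true` iff the walk from the start state along `x` ends at an accept state. -/
def eval (B : OBP n w) (x : Fin n → Bool) : Bool :=
  decide (B.walk 0 B.start (List.ofFn x) ∈ B.accept)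

/-- The probability that `B` accepts a uniformly random input. -/
noncomputable def acceptProb (B : OBP n w) : ℝ :=
  ((Finset.univ.filter fun x : Fin n → Bool => B.eval x = true).card : ℝ) / 2 ^ n

/-- `B` is a permutation branching program: each layer's transitions are permutations. -/
def IsPerm (B : OBP n w) : Prop :=
  ∀ i < n, ∀ b, Function.Bijective fun v => B.trans i v b

/-- The hit set at layer `i` induced by `H`: the states of layer `i` from which the walk
along the last `n - i` bits of some `y ∈ H` reaches an accept state. -/
def hitSet (B : OBP n w) (H : Finset (Fin n → Bool)) (i : ℕ) : Finset (Fin w) :=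
  Finset.univ.filter fun v => ∃ y ∈ H, B.walk i v ((List.ofFn y).drop i) ∈ B.accept

/-- The induced hit function `B_H`: accept iff the walk from the start state stays within
the hit sets at every layer. -/
def hitFun (B : OBP n w) (H : Finset (Fin n → Bool)) (x : Fin n → Bool) : Bool :=
  decide (∀ i ≤ n, B.walk 0 B.start ((List.ofFn x).take i) ∈ B.hitSet H i)

end OBP

/-- The fraction of inputs on which `f` outputs `true`. -/
noncomputable def acceptFrac {n : ℕ} (f : (Fin n → Bool) → Bool) : ℝ :=
  ((Finset.univ.filter fun x : Fin n → Bool => f x = true).card : ℝ) / 2 ^ n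

/-- `(Q, g)` is a deterministic nonadaptive `ε`-sampler for the class `F`: the output
`g f` depends only on the restriction of `f` to `Q`, and estimates the acceptance
probability of every `f ∈ F` to within `ε`. -/
def IsSampler {n : ℕ} (F : Set ((Fin n → Bool) → Bool)) (Q : Finset (Fin n → Bool))
    (g : ((Fin n → Bool) → Bool) → ℝ) (ε : ℝ) : Prop :=
  (∀ f f' : (Fin n → Bool) → Bool, (∀ x ∈ Q, f x = f' x) → g f = g f') ∧
    ∀ f ∈ F, |g f - acceptFrac f| ≤ ε

/-- `H` is a deterministic `ε`-hitter for the class `F`. -/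
def IsHitter {n : ℕ} (F : Set ((Fin n → Bool) → Bool)) (H : Finset (Fin n → Bool))
    (ε : ℝ) : Prop :=
  ∀ f ∈ F, acceptFrac f > ε → ∃ x ∈ H, f x = true

/-- Functions computed by permutation branching programs of length `n` and width `w`. -/
def permClassW (n w : ℕ) : Set ((Fin n → Bool) → Bool) :=
  { f | ∃ B : OBP n w, B.IsPerm ∧ f = B.eval }

/-- Functions computed by permutation branching programs of length `n`, arbitrary width,
with a single accept state. -/
def permClassSingle (n : ℕ) : Set ((Fin n → Bool) → Bool) :=
  { f | ∃ w, ∃ B : OBP n w, B.IsPerm ∧ B.accept.card = 1 ∧ f = B.eval }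

/-- Functions computed by permutation branching programs of length `n`, arbitrary width,
with at most `a` accept states. -/
def permClassA (n a : ℕ) : Set ((Fin n → Bool) → Bool) :=
  { f | ∃ w, ∃ B : OBP n w, B.IsPerm ∧ B.accept.card ≤ a ∧ f = B.eval }

/-- Functions computed by ordered branching programs of length `n` and width `w`. -/
def obpClassW (n w : ℕ) : Set ((Fin n → Bool) → Bool) :=
  { f | ∃ B : OBP n w, f = B.eval }

namespace OrderedProgram

open Finset

variable {α : Type*} {T T' : ℕ → α → Bool → α} {G : ℕ → α → Prop} {m n : ℕ} {δ : ℝ}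

/-- The probability that a uniformly random bit string of length `m` satisfies `φ`. -/
noncomputable def prob : ℕ → (List Bool → Prop) → ℝ
  | 0, φ => open Classical in if φ [] then 1 else 0
  | m + 1, φ => (prob m (fun z => φ (false :: z)) + prob m (fun z => φ (true :: z))) / 2

theorem prob_mono {φ ψ : List Bool → Prop} (h : ∀ z, z.length = m → φ z → ψ z) :
    prob m φ ≤ prob m ψ := by
  induction m generalizing φ ψ with
  | zero =>
    have := h [] rfl
    unfold prob
    split_ifs <;> simp_all
  | succ m ih =>
    have h₀ := ih (φ := fun z => φ (false :: z)) (ψ := fun z => ψ (false :: z))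
      fun z hz => h _ (by simp [hz])
    have h₁ := ih (φ := fun z => φ (true :: z)) (ψ := fun z => ψ (true :: z))
      fun z hz => h _ (by simp [hz])
    unfold prob
    linarith

theorem prob_or_le (φ ψ : List Bool → Prop) :
    prob m (fun z => φ z ∨ ψ z) ≤ prob m φ + prob m ψ := by
  induction m generalizing φ ψ with
  | zero =>
    unfold prob
    split_ifs <;> simp_all
  | succ m ih =>
    have h₀ := ih (fun z => φ (false :: z)) (fun z => ψ (false :: z))
    have h₁ := ih (fun z => φ (true :: z)) (fun z => ψ (true :: z))
    unfold prob
    linarith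

theorem prob_false : prob m (fun _ => False) = 0 := by
  induction m with
  | zero => simp [prob]
  | succ m ih => simp [prob, ih]

theorem prob_eq_zero {φ : List Bool → Prop} (h : ∀ z, z.length = m → ¬ φ z) : prob m φ ≤ 0 :=
  (prob_mono (ψ := fun _ => False) fun z hz hφ => h z hz hφ).trans prob_false.le

theorem prob_snoc (φ : List Bool → Prop) :
    prob (m + 1) φ
      = (prob m (fun z => φ (z ++ [false])) + prob m (fun z => φ (z ++ [true]))) / 2 := by
  induction m generalizing φ with
  | zero => simp [prob]
  | succ m ih =>
    rw [prob, ih, ih]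
    conv_rhs => rw [prob, prob]
    simp only [List.cons_append]
    ring

theorem prob_eq_card (φ : List Bool → Prop) [DecidablePred φ] :
    prob m φ = ((univ.filter fun x : Fin m → Bool => φ (List.ofFn x)).card : ℝ) / 2 ^ m := by
  classical
  induction m generalizing φ with
  | zero =>
    by_cases h : φ [] <;> simp [prob, h]
  | succ m ih =>
    rw [prob, ih, ih]
    have key : (univ.filter fun x : Fin (m + 1) → Bool => φ (List.ofFn x)).card
        = (univ.filter fun x : Fin m → Bool => φ (false :: List.ofFn x)).card
          + (univ.filter fun x : Fin m → Bool => φ (true :: List.ofFn x)).card := by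
      simp only [card_filter]
      rw [← (Fin.consEquiv fun _ : Fin (m + 1) => Bool).sum_comp, Fintype.sum_prod_type]
      simp [Fin.consEquiv, add_comm]
    rw [key]
    push_cast
    rw [pow_succ]
    field_simp

theorem prob_le_one (φ : List Bool → Prop) : prob m φ ≤ 1 := by
  induction m generalizing φ with
  | zero => unfold prob; split_ifs <;> norm_num
  | succ m ih =>
    have h₀ := ih fun z => φ (false :: z)
    have h₁ := ih fun z => φ (true :: z)
    unfold prob
    linarith

open Classical in
/-- Some string does at least as well as the average. -/
theorem exists_sum_prob_le_card {ι : Type*} (I : Finset ι) (φ : ι → List Bool → Prop) :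
    ∃ z : List Bool, z.length = m ∧
      ∑ i ∈ I, prob m (φ i) ≤ ((I.filter fun i => φ i z).card : ℝ) := by
  induction m generalizing φ with
  | zero => exact ⟨[], rfl, by simp [prob]⟩
  | succ m ih =>
    obtain ⟨z₀, hz₀, h₀⟩ := ih fun i z => φ i (false :: z)
    obtain ⟨z₁, hz₁, h₁⟩ := ih fun i z => φ i (true :: z)
    have hs : ∑ i ∈ I, prob (m + 1) (φ i)
        = (∑ i ∈ I, prob m (fun z => φ i (false :: z))
            + ∑ i ∈ I, prob m (fun z => φ i (true :: z))) / 2 := by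
      simp only [prob]
      rw [← sum_add_distrib, sum_div]
    rcases le_total (∑ i ∈ I, prob m (fun z => φ i (false :: z)))
      (∑ i ∈ I, prob m (fun z => φ i (true :: z))) with h | h
    · exact ⟨true :: z₁, by simp [hz₁], by linarith⟩
    · exact ⟨false :: z₀, by simp [hz₀], by linarith⟩

/-- The greedy construction of a hitting set for a finite family of dense predicates. -/
theorem exists_hitting_of_card {ι : Type*} (I : Finset ι) (φ : ι → List Bool → Prop) {η : ℝ}
    (hη : η ≤ 1) (t : ℕ) (hφ : ∀ i ∈ I, η ≤ prob m (φ i)) (hI : (I.card : ℝ) * (1 - η) ^ t < 1) :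
    ∃ H : Finset (List Bool), H.card ≤ t ∧ (∀ z ∈ H, z.length = m) ∧
      ∀ i ∈ I, ∃ z ∈ H, φ i z := by
  classical
  induction t generalizing I with
  | zero =>
    have : I = ∅ := by
      rw [pow_zero, mul_one] at hI
      exact card_eq_zero.mp (by exact_mod_cast Nat.lt_one_iff.mp (by exact_mod_cast hI))
    subst this
    exact ⟨∅, by simp⟩
  | succ t ih =>
    obtain ⟨z, hz, hc⟩ := exists_sum_prob_le_card (m := m) I φ
    have hsum : (I.card : ℝ) * η ≤ ∑ i ∈ I, prob m (φ i) := by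
      rw [← nsmul_eq_mul]
      exact card_nsmul_le_sum _ _ _ hφ
    have hsplit : ((I.filter fun i => φ i z).card : ℝ) + (I.filter fun i => ¬ φ i z).card
        = I.card := by
      exact_mod_cast card_filter_add_card_filter_not (s := I) (fun i => φ i z)
    obtain ⟨H, hH, hlen, hhit⟩ := ih (I.filter fun i => ¬ φ i z)
      (fun i hi => hφ i (mem_filter.mp hi).1) (by
        refine lt_of_le_of_lt ?_ hI
        rw [pow_succ', ← mul_assoc]
        refine mul_le_mul_of_nonneg_right (by linarith) (pow_nonneg (by linarith) _))
    refine ⟨insert z H, (card_insert_le _ _).trans (by omega), ?_, fun i hi => ?_⟩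
    · intro y hy
      rcases mem_insert.mp hy with rfl | hy
      exacts [hz, hlen y hy]
    · by_cases h : φ i z
      · exact ⟨z, mem_insert_self _ _, h⟩
      · obtain ⟨y, hy, hyi⟩ := hhit i (mem_filter.mpr ⟨hi, h⟩)
        exact ⟨y, mem_insert_of_mem hy, hyi⟩

/-- The state reached from state `v` of layer `i` along the transitions `T` on input `z`. -/
def run (T : ℕ → α → Bool → α) : ℕ → α → List Bool → α
  | _, v, [] => v
  | i, v, b :: z => run T (i + 1) (T i v b) z

/-- The run from state `v` of layer `i` on input `z` visits only states satisfying `G`. -/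
def Stays (T : ℕ → α → Bool → α) (G : ℕ → α → Prop) : ℕ → α → List Bool → Prop
  | i, v, [] => G i v
  | i, v, b :: z => G i v ∧ Stays T G (i + 1) (T i v b) z

theorem run_append (i : ℕ) (v : α) (y z : List Bool) :
    run T i v (y ++ z) = run T (i + y.length) (run T i v y) z := by
  induction y generalizing i v with
  | nil => rfl
  | cons b y ih =>
    simp only [List.cons_append, run, ih, List.length_cons]
    congr 1
    omega

theorem run_congr (i : ℕ) (v : α) (z : List Bool)
    (h : ∀ j, i ≤ j → j < i + z.length → T j = T' j) : run T i v z = run T' i v z := by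
  induction z generalizing i v with
  | nil => rfl
  | cons b z ih =>
    simp only [List.length_cons] at h
    rw [run, run, h i le_rfl (by omega)]
    exact ih _ _ fun j h₁ h₂ => h j (by omega) (by omega)

theorem run_shift (i j : ℕ) (v : α) (z : List Bool) :
    run (fun k => T (i + k)) j v z = run T (i + j) v z := by
  induction z generalizing j v with
  | nil => rfl
  | cons b z ih => simp only [run, ih, add_assoc]

theorem run_injective (hT : ∀ i < n, ∀ b, Function.Injective fun v => T i v b) {i : ℕ}
    {z : List Bool} (hz : i + z.length ≤ n) : Function.Injective fun v => run T i v z := by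
  induction z generalizing i with
  | nil => exact fun _ _ h => h
  | cons b z ih =>
    simp only [List.length_cons] at hz
    intro u v h
    exact hT i (by omega) b (ih (by omega) h)

theorem Stays.left {i : ℕ} {v : α} {z : List Bool} (h : Stays T G i v z) : G i v := by
  cases z with
  | nil => exact h
  | cons b z => exact h.1

theorem stays_append (i : ℕ) (v : α) (y z : List Bool) :
    Stays T G i v (y ++ z) ↔ (Stays T G i v y ∧ Stays T G (i + y.length) (run T i v y) z) := by
  induction y generalizing i v with
  | nil => exact ⟨fun h => ⟨h.left, h⟩, fun h => h.2⟩
  | cons b y ih =>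
    simp only [List.cons_append, Stays, ih, run, List.length_cons, and_assoc]
    rw [show i + 1 + y.length = i + (y.length + 1) by omega]

theorem Stays.right {i : ℕ} {v : α} {z : List Bool} (h : Stays T G i v z) :
    G (i + z.length) (run T i v z) := by
  have := (stays_append i v z []).mp (by simpa using h)
  exact this.2

/-- Rejecting as soon as the probability of reaching `a` drops below `δ` costs at most `δ`. -/
theorem prob_not_stays_backward_le (hδ : 0 ≤ δ) (a : α) {i : ℕ} (him : i + m = n) (v : α) :
    prob m (fun z => run T i v z = a ∧
      ¬ Stays T (fun j u => δ ≤ prob (n - j) fun z => run T j u z = a) i v z) ≤ δ := by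
  induction m generalizing i v with
  | zero =>
    by_cases hv : δ ≤ prob (n - i) fun z => run T i v z = a
    · refine (prob_eq_zero fun z hz h => h.2 ?_).trans hδ
      rw [List.length_eq_zero_iff.mp hz]
      exact hv
    · rw [show n - i = 0 by omega] at hv
      exact (prob_mono fun z _ h => h.1).trans (not_le.mp hv).le
  | succ m ih =>
    by_cases hv : δ ≤ prob (n - i) fun z => run T i v z = a
    · have h₀ := ih (i := i + 1) (by omega) (T i v false)
      have h₁ := ih (i := i + 1) (by omega) (T i v true)
      simp only [prob, run, Stays, hv, true_and]
      linarith
    · rw [show n - i = m + 1 by omega] at hv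
      exact (prob_mono fun z _ h => h.1).trans (not_le.mp hv).le

/-- Rejecting as soon as a state reached with probability below `δ` is visited costs at most
`δ` at every state. -/
theorem prob_not_stays_forward_le (hT : ∀ i < n, ∀ b, Function.Injective fun v => T i v b)
    (hδ : 0 ≤ δ) (s : α) (hm : m ≤ n) (u : α) :
    prob m (fun z => run T 0 s z = u ∧
      ¬ Stays T (fun j v => δ ≤ prob j fun z => run T 0 s z = v) 0 s z) ≤ δ := by
  induction m generalizing u with
  | zero =>
    by_cases hu : δ ≤ prob 0 fun z => run T 0 s z = u
    · refine (prob_eq_zero fun z hz h => h.2 ?_).trans hδ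
      rw [List.length_eq_zero_iff.mp hz] at h ⊢
      rw [← h.1] at hu
      exact hu
    · exact (prob_mono fun z _ h => h.1).trans (not_le.mp hu).le
  | succ m ih =>
    by_cases hu : δ ≤ prob (m + 1) fun z => run T 0 s z = u
    · have key : ∀ b, prob m (fun z => run T 0 s (z ++ [b]) = u ∧
          ¬ Stays T (fun j v => δ ≤ prob j fun z => run T 0 s z = v) 0 s (z ++ [b])) ≤ δ := by
        intro b
        by_cases hex : ∃ v, T m v b = u
        · obtain ⟨v, hv⟩ := hex
          refine (prob_mono fun z hz h => ?_).trans (ih (by omega) v)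
          rw [run_append, stays_append] at h
          simp only [zero_add, hz, run, Stays] at h
          refine ⟨hT m (by omega) b (h.1.trans hv.symm), fun hs => h.2 ⟨hs, ?_, ?_⟩⟩
          · simpa [hz] using hs.right
          · rw [h.1]; exact hu
        · refine (prob_eq_zero fun z hz h => hex ⟨run T 0 s z, ?_⟩).trans hδ
          have := h.1
          rw [run_append] at this
          simpa [hz, run] using this
      rw [prob_snoc]
      linarith [key false, key true]
    · exact (prob_mono fun z _ h => h.1).trans (not_le.mp hu).le

open Classical in
/-- At most `1 / δ` states reach `a` with probability at least `δ`. -/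
theorem card_heavy_le [Fintype α] (hT : ∀ i < n, ∀ b, Function.Injective fun v => T i v b)
    (hδ : 0 < δ) (a : α) {i : ℕ} (hi : i ≤ n) :
    (univ.filter fun v => δ ≤ prob (n - i) fun z => run T i v z = a).card ≤ ⌊1 / δ⌋₊ := by
  set S := univ.filter fun v => δ ≤ prob (n - i) fun z => run T i v z = a with hS
  obtain ⟨z, hz, hc⟩ := exists_sum_prob_le_card (m := n - i) S fun v z => run T i v z = a
  have h₁ : (S.filter fun v => run T i v z = a).card ≤ 1 := by
    refine card_le_one.mpr fun u hu v hv => ?_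
    exact run_injective hT (z := z) (by omega)
      ((mem_filter.mp hu).2.trans (mem_filter.mp hv).2.symm)
  have h₂ : (S.card : ℝ) * δ ≤ ∑ v ∈ S, prob (n - i) (fun z => run T i v z = a) := by
    rw [← nsmul_eq_mul]
    exact card_nsmul_le_sum _ _ _ fun v hv => (mem_filter.mp hv).2
  have h₃ : ((S.filter fun v => run T i v z = a).card : ℝ) ≤ 1 := by exact_mod_cast h₁
  refine Nat.le_floor ?_
  rw [le_div_iff₀ hδ]
  linarith

/-- Parameters of a program of length `m` with states `Option (Fin k)`: the transitions, the
start state and the accept state. -/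
abbrev NarrowProgram (m k : ℕ) : Type :=
  (Fin m → Option (Fin k) → Bool → Option (Fin k)) × Option (Fin k) × Option (Fin k)

/-- The acceptance predicate of a narrow program. -/
def NarrowProgram.Accepts {m k : ℕ} (p : NarrowProgram m k) (z : List Bool) : Prop :=
  run (fun i c b => if h : i < m then p.1 ⟨i, h⟩ c b else c) 0 p.2.1 z = p.2.2

/-- A permutation program is approximated from below by a narrow program. -/
theorem exists_narrowProgram [Fintype α]
    (hT : ∀ i < m, ∀ b, Function.Injective fun v => T i v b) {η : ℝ} (hη : 0 < η) (s a : α)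
    (hp : 2 * η ≤ prob m fun z => run T 0 s z = a) :
    ∃ p : NarrowProgram m ⌊1 / η⌋₊,
      (∀ z, z.length = m → p.Accepts z → run T 0 s z = a) ∧ η ≤ prob m p.Accepts := by
  classical
  set k := ⌊1 / η⌋₊
  set G : ℕ → α → Prop := fun j u => η ≤ prob (m - j) fun z => run T j u z = a with hG
  have hη₁ : η ≤ 1 := by linarith [prob_le_one (m := m) fun z => run T 0 s z = a]
  have hGa : G m a := by simp [hG, prob, run, hη₁]
  have hemb : ∀ i, ∃ e : α → Option (Fin k), i ≤ m →
      (∀ u v, G i u → G i v → e u = e v → u = v) ∧ ∀ v, e v = none ↔ ¬ G i v := by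
    intro i
    by_cases hi : i ≤ m
    · have hc : Fintype.card {v // G i v} ≤ Fintype.card (Fin k) := by
        rw [Fintype.card_subtype, Fintype.card_fin]
        exact card_heavy_le hT hη a hi
      obtain ⟨f⟩ := Function.Embedding.nonempty_of_card_le hc
      refine ⟨fun v => if h : G i v then some (f ⟨v, h⟩) else none, fun _ => ⟨?_, ?_⟩⟩
      · intro u v hu hv h
        simpa [hu, hv] using h
      · intro v
        by_cases h : G i v <;> simp [h]
    · exact ⟨fun _ => none, fun h => absurd h hi⟩
  choose e he using hemb
  let N : ℕ → Option (Fin k) → Bool → Option (Fin k) := fun i c b =>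
    if h : ∃ v, G i v ∧ e i v = c then e (i + 1) (T i h.choose b) else none
  have hN : ∀ i ≤ m, ∀ v b, G i v → N i (e i v) b = e (i + 1) (T i v b) := by
    intro i hi v b hv
    have h : ∃ u, G i u ∧ e i u = e i v := ⟨v, hv, rfl⟩
    simp only [N, dif_pos h]
    rw [(he i hi).1 _ _ h.choose_spec.1 hv h.choose_spec.2]
  have hN_none : ∀ i ≤ m, ∀ b, N i none b = none := by
    intro i hi b
    have h : ¬ ∃ u, G i u ∧ e i u = none := fun ⟨u, hu, hu'⟩ => ((he i hi).2 u).mp hu' hu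
    simp only [N, dif_neg h]
  have hrun_none : ∀ (z : List Bool) (i : ℕ), i + z.length ≤ m → run N i none z = none := by
    intro z
    induction z with
    | nil => intro i _; rfl
    | cons b z ih =>
      intro i hi
      simp only [List.length_cons] at hi
      rw [run, hN_none i (by omega)]
      exact ih _ (by omega)
  have hrun : ∀ (z : List Bool) (i : ℕ) (v : α), i + z.length ≤ m → run N i (e i v) z =
      if Stays T G i v z then e (i + z.length) (run T i v z) else none := by
    intro z
    induction z with
    | nil =>
      intro i v hi
      by_cases hv : G i v
      · simp [run, Stays, hv]
      · simpa [run, Stays, hv] using ((he i (by simpa using hi)).2 v).mpr hv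
    | cons b z ih =>
      intro i v hi
      simp only [List.length_cons] at hi
      by_cases hv : G i v
      · simp only [run, Stays, hv, true_and, List.length_cons]
        rw [hN i (by omega) v b hv, ih _ _ (by omega),
          show i + 1 + z.length = i + (z.length + 1) by omega]
      · rw [((he i (by omega)).2 v).mpr hv, hrun_none _ _ (by simpa using hi)]
        simp [Stays, hv]
  have hacc : ∀ z : List Bool, z.length = m →
      (NarrowProgram.Accepts ((fun i => N i, e 0 s, e m a) : NarrowProgram m k) z ↔
        run T 0 s z = a ∧ Stays T G 0 s z) := by
    intro z hz
    have hN' : run (fun i c b => if h : i < m then N i c b else c) 0 (e 0 s) z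
        = run N 0 (e 0 s) z := by
      refine run_congr _ _ _ fun j _ hj => ?_
      funext c b
      rw [dif_pos (by omega)]
    rw [NarrowProgram.Accepts]
    simp only
    rw [hN', hrun z 0 s (by omega), zero_add, hz]
    by_cases hs : Stays T G 0 s z
    · have hr := hs.right
      rw [zero_add, hz] at hr
      simp only [hs, if_true, and_true]
      exact ⟨fun h => (he m le_rfl).1 _ _ hr hGa h, fun h => by rw [h]⟩
    · simp only [hs, if_false, and_false, iff_false]
      exact fun h => ((he m le_rfl).2 a).mp h.symm hGa
  refine ⟨_, fun z hz h => ((hacc z hz).mp h).1, ?_⟩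
  have hloss := prob_not_stays_backward_le (T := T) (n := m) hη.le a (zero_add m) s
  have hsub : prob m (fun z => run T 0 s z = a) ≤
      prob m (NarrowProgram.Accepts ((fun i => N i, e 0 s, e m a) : NarrowProgram m k)) +
        prob m (fun z => run T 0 s z = a ∧ ¬ Stays T G 0 s z) := by
    refine (prob_mono fun z hz h => ?_).trans (prob_or_le _ _)
    by_cases hs : Stays T G 0 s z
    · exact Or.inl ((hacc z hz).mpr ⟨h, hs⟩)
    · exact Or.inr ⟨h, hs⟩
  linarith

/-- `H` hits every permutation program of length `m` that reaches a state with probability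
at least `δ`. -/
def Hits (H : Finset (List Bool)) (m : ℕ) (δ : ℝ) : Prop :=
  ∀ (w : ℕ) (T : ℕ → Fin w → Bool → Fin w),
    (∀ i < m, ∀ b, Function.Injective fun v => T i v b) → ∀ s a,
      δ ≤ prob m (fun z => run T 0 s z = a) → ∃ z ∈ H, run T 0 s z = a

theorem card_narrowProgram_mul_lt_one {k t : ℕ} {η : ℝ} (hη : 0 < η) (hη₁ : η ≤ 1)
    (hk : k = ⌊1 / η⌋₊) (hm : m ≤ n) (ht : t = (k + 1) * ((k + 1) * (2 * (k + 1) * n + 2))) :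
    (Fintype.card (NarrowProgram m k) : ℝ) * (1 - η) ^ t < 1 := by
  have hcard : Fintype.card (NarrowProgram m k) = (k + 1) ^ (2 * (k + 1) * m + 2) := by
    simp only [NarrowProgram, Fintype.card_prod, Fintype.card_fun, Fintype.card_option,
      Fintype.card_fin, Fintype.card_bool]
    rw [← pow_mul, ← pow_mul, pow_add]
    ring
  have h₁ : (Fintype.card (NarrowProgram m k) : ℝ)
      ≤ Real.exp (k * (2 * (k + 1) * n + 2)) := by
    have hm' : (m : ℝ) ≤ n := by exact_mod_cast hm
    calc (Fintype.card (NarrowProgram m k) : ℝ) = ((k : ℝ) + 1) ^ (2 * (k + 1) * m + 2) := by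
          rw [hcard]; push_cast; rfl
      _ ≤ Real.exp k ^ (2 * (k + 1) * m + 2) :=
          pow_le_pow_left₀ (by positivity) (Real.add_one_le_exp _) _
      _ = Real.exp (k * (2 * (k + 1) * m + 2)) := by
          rw [← Real.exp_nat_mul]; push_cast; ring_nf
      _ ≤ _ := by gcongr
  have h₂ : (1 - η) ^ t ≤ Real.exp (-(η * t)) := by
    calc (1 - η) ^ t ≤ Real.exp (-η) ^ t :=
          pow_le_pow_left₀ (by linarith) (by linarith [Real.add_one_le_exp (-η)]) _
      _ = _ := by rw [← Real.exp_nat_mul]; ring_nf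
  have h₃ : 1 < η * (k + 1) := by
    have := Nat.lt_floor_add_one (1 / η)
    rw [← hk, div_lt_iff₀ hη] at this
    linarith
  have h₄ : (k : ℝ) * (2 * (k + 1) * n + 2) < η * t := by
    set A : ℝ := 2 * (k + 1) * n + 2 with hA
    have hA0 : 0 < A := by positivity
    have htA : η * (t : ℝ) = (η * (k + 1)) * ((k + 1) * A) := by
      rw [ht, hA]; push_cast; ring
    have hk0 : (0 : ℝ) ≤ k := k.cast_nonneg
    have : (k + 1) * A ≤ (η * (k + 1)) * ((k + 1) * A) :=
      le_mul_of_one_le_left (by positivity) h₃.le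
    nlinarith
  calc (Fintype.card (NarrowProgram m k) : ℝ) * (1 - η) ^ t
      ≤ Real.exp (k * (2 * (k + 1) * n + 2)) * Real.exp (-(η * t)) :=
        mul_le_mul h₁ h₂ (pow_nonneg (by linarith) _) (Real.exp_pos _).le
    _ = Real.exp (k * (2 * (k + 1) * n + 2) + -(η * t)) := (Real.exp_add _ _).symm
    _ < Real.exp 0 := Real.exp_lt_exp.mpr (by linarith)
    _ = 1 := Real.exp_zero

theorem exists_hits {k t : ℕ} {η : ℝ} (hη : 0 < η) (hη₁ : η ≤ 1) (hk : k = ⌊1 / η⌋₊)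
    (hm : m ≤ n) (ht : t = (k + 1) * ((k + 1) * (2 * (k + 1) * n + 2))) :
    ∃ H : Finset (List Bool), H.card ≤ t ∧ (∀ z ∈ H, z.length = m) ∧ Hits H m (2 * η) := by
  classical
  have hI : (((univ : Finset (NarrowProgram m k)).filter
      fun p => η ≤ prob m p.Accepts).card : ℝ) * (1 - η) ^ t < 1 := by
    refine lt_of_le_of_lt ?_ (card_narrowProgram_mul_lt_one hη hη₁ hk hm ht)
    refine mul_le_mul_of_nonneg_right ?_ (pow_nonneg (by linarith) _)
    exact_mod_cast card_le_univ _
  obtain ⟨H, hH, hlen, hhit⟩ := exists_hitting_of_card _ NarrowProgram.Accepts hη₁ t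
    (fun p hp => (mem_filter.mp hp).2) hI
  refine ⟨H, hH, hlen, fun w T hT s a hp => ?_⟩
  subst hk
  obtain ⟨p, hp₁, hp₂⟩ := exists_narrowProgram hT hη s a hp
  obtain ⟨z, hz, hzp⟩ := hhit p (mem_filter.mpr ⟨mem_univ _, hp₂⟩)
  exact ⟨z, hz, hp₁ z (hlen z hz) hzp⟩

/-- If two permutation programs agree on all strings glued from hitting prefixes and hitting
suffixes, then the acceptance probability of the first is at most that of the second plus
`2 * δ`. -/
theorem prob_le_of_agree {w w' : ℕ} {T : ℕ → Fin w → Bool → Fin w}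
    {T' : ℕ → Fin w' → Bool → Fin w'}
    (hT : ∀ i < n, ∀ b, Function.Injective fun v => T i v b)
    (hT' : ∀ i < n, ∀ b, Function.Injective fun v => T' i v b)
    (hδ : 0 ≤ δ) {H : ℕ → Finset (List Bool)} (hlen : ∀ i ≤ n, ∀ z ∈ H i, z.length = i)
    (hhit : ∀ i ≤ n, Hits (H i) i δ) {s a : Fin w} {s' a' : Fin w'}
    (h_glue : ∀ i < n, ∀ x ∈ H i, ∀ y ∈ H (n - i),
      run T 0 s (x ++ y) = a → run T' 0 s' (x ++ y) = a')
    (h_bit : ∀ i < n, ∀ x ∈ H i, ∀ b, ∀ y ∈ H (n - (i + 1)),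
      run T 0 s (x ++ b :: y) = a → run T' 0 s' (x ++ b :: y) = a')
    (hn : 0 < n) :
    prob n (fun z => run T 0 s z = a) ≤ prob n (fun z => run T' 0 s' z = a') + 2 * δ := by
  set G : ℕ → Fin w → Prop := fun j u => δ ≤ prob (n - j) fun z => run T j u z = a with hG
  set F : ℕ → Fin w → Prop := fun j v => δ ≤ prob j fun z => run T 0 s z = v with hF
  have hGhit : ∀ i ≤ n, ∀ v, G i v → ∃ y ∈ H (n - i), run T i v y = a := by
    intro i hi v hv
    obtain ⟨y, hy, h⟩ := hhit (n - i) (by omega) w (fun k => T (i + k))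
      (fun j hj b => hT (i + j) (by omega) b) v a (by simpa only [run_shift, add_zero] using hv)
    exact ⟨y, hy, by simpa only [run_shift, add_zero] using h⟩
  have hFhit : ∀ i ≤ n, ∀ v, F i v → ∃ x ∈ H i, run T 0 s x = v := fun i hi v hv =>
    hhit i hi w T (fun j hj b => hT j (by omega) b) s v hv
  have key : ∀ p : List Bool, p.length ≤ n → Stays T G 0 s p → Stays T F 0 s p →
      ∀ y ∈ H (n - p.length), run T p.length (run T 0 s p) y = a →
        run T' p.length (run T' 0 s' p) y = a' := by
    intro p
    induction p using List.reverseRecOn with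
    | nil =>
      intro _ _ hFs y hy hya
      obtain ⟨x, hx, -⟩ := hFhit 0 (by omega) s hFs.left
      have hx0 := List.length_eq_zero_iff.mp (hlen 0 (by omega) x hx)
      subst hx0
      simpa [run] using h_glue 0 hn [] hx y hy (by simpa [run] using hya)
    | append_singleton p b ih =>
      intro hp hGs hFs y hy hya
      simp only [List.length_append, List.length_cons, List.length_nil, zero_add] at hp hy hya ⊢
      have hG' := (stays_append _ _ _ _).mp hGs
      have hF' := (stays_append _ _ _ _).mp hFs
      have hGv := hG'.1.right
      have hFv := hF'.1.right
      rw [zero_add] at hGv hFv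
      obtain ⟨y₀, hy₀, hy₀a⟩ := hGhit _ (by omega) _ hGv
      obtain ⟨x, hx, hxv⟩ := hFhit _ (by omega) _ hFv
      have hxl := hlen _ (by omega) x hx
      have hyl := hlen _ (by omega) y₀ hy₀
      have h₁ := ih (by omega) hG'.1 hF'.1 y₀ hy₀ hy₀a
      have h₂ := h_glue p.length (by omega) x hx y₀ hy₀
        (by rw [run_append, hxl, hxv, zero_add]; exact hy₀a)
      rw [run_append, hxl, zero_add] at h₂
      have h₃ : run T' 0 s' x = run T' 0 s' p :=
        run_injective hT' (z := y₀) (by omega) (h₂.trans h₁.symm)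
      have h₄ := h_bit p.length (by omega) x hx b y hy (by
        rw [run_append, hxl, hxv, zero_add]
        rw [run_append, zero_add] at hya
        exact hya)
      rw [run_append, hxl, h₃, zero_add] at h₄
      rw [run_append, zero_add]
      exact h₄
  have hsub : prob n (fun z => run T 0 s z = a) ≤ prob n (fun z => run T' 0 s' z = a') +
      (prob n (fun z => run T 0 s z = a ∧ ¬ Stays T G 0 s z) +
        prob n (fun z => run T 0 s z = a ∧ ¬ Stays T F 0 s z)) := by
    refine le_trans (prob_mono fun z hz h => ?_)
      ((prob_or_le _ (fun z => (run T 0 s z = a ∧ ¬ Stays T G 0 s z) ∨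
        (run T 0 s z = a ∧ ¬ Stays T F 0 s z))).trans
          (add_le_add le_rfl (prob_or_le _ _)))
    by_cases hGs : Stays T G 0 s z
    · by_cases hFs : Stays T F 0 s z
      · refine Or.inl ?_
        have hr := hGs.right
        rw [zero_add, hz] at hr
        obtain ⟨y, hy, -⟩ := hGhit n le_rfl _ hr
        have hyl := hlen _ (by omega) y hy
        have hy0 : y = [] := List.length_eq_zero_iff.mp (by omega)
        subst hy0
        exact key z hz.le hGs hFs [] (by rw [hz]; exact hy) h
      · exact Or.inr (Or.inr ⟨h, hFs⟩)
    · exact Or.inr (Or.inl ⟨h, hGs⟩)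
  have hb := prob_not_stays_backward_le (T := T) (n := n) hδ a (zero_add n) s
  have hf := prob_not_stays_forward_le hT hδ s le_rfl a
  linarith

/-- The strings of length `n` glued from prefixes and suffixes in `H`, possibly with a free
bit in between. -/
def glued (H : ℕ → Finset (List Bool)) (n : ℕ) : Finset (List Bool) :=
  (range n).biUnion fun i =>
    ((H i ×ˢ H (n - i)).image fun q => q.1 ++ q.2) ∪
      ((H i ×ˢ (univ : Finset Bool) ×ˢ H (n - (i + 1))).image fun q => q.1 ++ q.2.1 :: q.2.2)

theorem card_glued_le {H : ℕ → Finset (List Bool)} {t : ℕ} (hH : ∀ i ≤ n, (H i).card ≤ t) :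
    (glued H n).card ≤ n * (3 * t ^ 2) := by
  refine (card_biUnion_le_card_mul _ _ (3 * t ^ 2) fun i hi => ?_).trans (by rw [card_range])
  have hi := mem_range.mp hi
  refine (card_union_le _ _).trans ?_
  have h₁ := card_image_le (s := H i ×ˢ H (n - i)) (f := fun q => q.1 ++ q.2)
  have h₂ := card_image_le (s := H i ×ˢ (univ : Finset Bool) ×ˢ H (n - (i + 1)))
    (f := fun q => q.1 ++ q.2.1 :: q.2.2)
  rw [card_product] at h₁
  rw [card_product, card_product, card_univ, Fintype.card_bool] at h₂
  have h₃ := Nat.mul_le_mul (hH i hi.le) (hH (n - i) (by omega))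
  have h₄ := Nat.mul_le_mul (hH i hi.le)
    (Nat.mul_le_mul (le_refl 2) (hH (n - (i + 1)) (by omega)))
  calc _ ≤ t * t + t * (2 * t) := add_le_add (h₁.trans h₃) (h₂.trans h₄)
    _ = _ := by ring

theorem walk_eq_run {n w : ℕ} (B : OBP n w) (i : ℕ) (v : Fin w) (z : List Bool) :
    B.walk i v z = run B.trans i v z := by
  induction z generalizing i v with
  | nil => rfl
  | cons b z ih => simp only [OBP.walk, run, ih]

/-- The functions computed by single-accept-state permutation programs, in terms of `run`. -/
theorem exists_run_of_mem_permClassSingle {f : (Fin n → Bool) → Bool}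
    (hf : f ∈ permClassSingle n) :
    ∃ (w : ℕ) (T : ℕ → Fin w → Bool → Fin w) (s a : Fin w),
      (∀ i < n, ∀ b, Function.Injective fun v => T i v b) ∧
      (∀ x, f x = true ↔ run T 0 s (List.ofFn x) = a) ∧
      acceptFrac f = prob n fun z => run T 0 s z = a := by
  obtain ⟨w, B, hB, hc, rfl⟩ := hf
  obtain ⟨a, ha⟩ := card_eq_one.mp hc
  have heval : ∀ x, B.eval x = true ↔ run B.trans 0 B.start (List.ofFn x) = a := by
    intro x
    simp [OBP.eval, ha, walk_eq_run]
  refine ⟨w, B.trans, B.start, a, fun i hi b => (hB i hi b).1, heval, ?_⟩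
  rw [prob_eq_card, acceptFrac]
  simp only [heval]

theorem acceptFrac_nonneg (f : (Fin n → Bool) → Bool) : 0 ≤ acceptFrac f := by
  unfold acceptFrac
  positivity

theorem acceptFrac_le_one (f : (Fin n → Bool) → Bool) : acceptFrac f ≤ 1 := by
  unfold acceptFrac
  rw [div_le_one (by positivity)]
  have := card_le_univ (univ.filter fun x : Fin n → Bool => f x = true)
  rw [Fintype.card_fun, Fintype.card_bool, Fintype.card_fin] at this
  exact_mod_cast this

/-- Acceptance fractions of functions in the class that agree on the glued strings are close. -/
theorem acceptFrac_le_of_agree (hδ : 0 ≤ δ) (hn : 0 < n) {H : ℕ → Finset (List Bool)}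
    (hlen : ∀ i ≤ n, ∀ z ∈ H i, z.length = i) (hhit : ∀ i ≤ n, Hits (H i) i δ)
    {f f' : (Fin n → Bool) → Bool} (hf : f ∈ permClassSingle n) (hf' : f' ∈ permClassSingle n)
    (hagree : ∀ x, List.ofFn x ∈ glued H n → f x = f' x) :
    acceptFrac f ≤ acceptFrac f' + 2 * δ := by
  obtain ⟨w, T, s, a, hT, hfT, hfrac⟩ := exists_run_of_mem_permClassSingle hf
  obtain ⟨w', T', s', a', hT', hfT', hfrac'⟩ := exists_run_of_mem_permClassSingle hf'
  rw [hfrac, hfrac']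
  have hrun : ∀ z ∈ glued H n, z.length = n → run T 0 s z = a → run T' 0 s' z = a' := by
    intro z hz hzn h
    subst hzn
    have hx : List.ofFn z.get = z := List.ofFn_get z
    have h₁ := hagree z.get (by rwa [hx])
    have h₂ := (hfT z.get).mpr (by rwa [hx])
    rw [h₁, hfT', hx] at h₂
    exact h₂
  refine prob_le_of_agree hT hT' hδ hlen hhit ?_ ?_ hn
  · intro i hi x hx y hy
    refine hrun _ ?_ ?_
    · exact mem_biUnion.mpr ⟨i, mem_range.mpr hi, mem_union_left _
        (mem_image.mpr ⟨(x, y), mem_product.mpr ⟨hx, hy⟩, rfl⟩)⟩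
    · rw [List.length_append, hlen i hi.le x hx, hlen (n - i) (by omega) y hy]
      omega
  · intro i hi x hx b y hy
    refine hrun _ ?_ ?_
    · exact mem_biUnion.mpr ⟨i, mem_range.mpr hi, mem_union_right _
        (mem_image.mpr ⟨(x, b, y), mem_product.mpr
          ⟨hx, mem_product.mpr ⟨mem_univ _, hy⟩⟩, rfl⟩)⟩
    · rw [List.length_append, List.length_cons, hlen i hi.le x hx,
        hlen (n - (i + 1)) (by omega) y hy]
      omega

/-- A query set on which the class is determined up to `ε` yields an `ε`-sampler. -/
theorem exists_isSampler {F : Set ((Fin n → Bool) → Bool)} {Q : Finset (Fin n → Bool)} {ε : ℝ}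
    (h : ∀ f ∈ F, ∀ f' ∈ F, (∀ x ∈ Q, f x = f' x) → acceptFrac f ≤ acceptFrac f' + ε) :
    ∃ g, IsSampler F Q g ε := by
  refine ⟨fun f => acceptFrac (Classical.epsilon fun f₀ => f₀ ∈ F ∧ ∀ x ∈ Q, f₀ x = f x),
    fun f f' hff' => ?_, fun f hf => ?_⟩
  · have : (fun f₀ => f₀ ∈ F ∧ ∀ x ∈ Q, f₀ x = f x)
        = fun f₀ => f₀ ∈ F ∧ ∀ x ∈ Q, f₀ x = f' x := by
      funext f₀
      refine propext (and_congr_right fun _ => forall₂_congr fun x hx => ?_)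
      rw [hff' x hx]
    simp only [this]
  · have hspec := Classical.epsilon_spec
      (p := fun f₀ => f₀ ∈ F ∧ ∀ x ∈ Q, f₀ x = f x) ⟨f, hf, fun _ _ => rfl⟩
    have h₁ := h _ hspec.1 f hf hspec.2
    have h₂ := h f hf _ hspec.1 fun x hx => (hspec.2 x hx).symm
    rw [abs_le]
    constructor <;> linarith

theorem query_bound_le {k t : ℕ} {ε : ℝ} (hn : 1 ≤ n) (hε : 0 < ε) (hε₂ : ε < 1 / 2)
    (hk : k = ⌊1 / (ε / 4)⌋₊) (ht : t = (k + 1) * ((k + 1) * (2 * (k + 1) * n + 2))) :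
    (n * (3 * t ^ 2) : ℝ) ≤ ((n : ℝ) / ε) ^ 26 := by
  have hn' : (1 : ℝ) ≤ n := by exact_mod_cast hn
  have hN : 1 / ε ≤ n / ε := by gcongr
  have hε' : 2 ≤ 1 / ε := by rw [le_div_iff₀ hε]; linarith
  set N : ℝ := n / ε with hNdef
  have hk₁ : (k : ℝ) + 1 ≤ 5 * (1 / ε) := by
    have : (k : ℝ) ≤ 1 / (ε / 4) := by
      rw [hk]; exact Nat.floor_le (by positivity)
    have h4 : 1 / (ε / 4) = 4 * (1 / ε) := by field_simp
    linarith
  have hkN : (k : ℝ) + 1 ≤ 5 * N := by linarith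
  have hkn : ((k : ℝ) + 1) * n ≤ 5 * N := by
    calc ((k : ℝ) + 1) * n ≤ 5 * (1 / ε) * n := by gcongr
      _ = 5 * N := by rw [hNdef]; ring
  have hnN : (n : ℝ) ≤ N := by
    rw [hNdef, le_div_iff₀ hε]; nlinarith
  have htN : (t : ℝ) ≤ 300 * N ^ 3 := by
    calc (t : ℝ) = (k + 1) * ((k + 1) * (2 * ((k + 1) * n) + 2)) := by
          rw [ht]; push_cast; ring
      _ ≤ 5 * N * (5 * N * (12 * N)) := by gcongr; linarith
      _ = 300 * N ^ 3 := by ring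
  have hN2 : 2 ≤ N := by linarith
  calc (n * (3 * t ^ 2) : ℝ) ≤ N * (3 * (300 * N ^ 3) ^ 2) := by gcongr
    _ = 270000 * N ^ 7 := by ring
    _ ≤ 2 ^ 19 * N ^ 7 := by gcongr; norm_num
    _ ≤ N ^ 19 * N ^ 7 := by gcongr
    _ = N ^ 26 := by ring

end OrderedProgram

/-- There is a deterministic nonadaptive `ε`-sampler for unbounded-width permutation
branching programs with a single accept state, with query complexity `poly(n/ε)`. -/
theorem stmt0 :
    ∃ C : ℝ, 0 < C ∧ ∀ n : ℕ, 1 ≤ n → ∀ ε : ℝ, 0 < ε → ε < 1 →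
      ∃ (Q : Finset (Fin n → Bool)) (g : ((Fin n → Bool) → Bool) → ℝ),
        IsSampler (permClassSingle n) Q g ε ∧ (Q.card : ℝ) ≤ ((n : ℝ) / ε) ^ C := by
  refine ⟨26, by norm_num, fun n hn ε hε hε₁ => ?_⟩
  rcases le_or_gt (1 / 2) ε with hhalf | hhalf
  · refine ⟨∅, fun _ => 1 / 2, ⟨fun _ _ _ => rfl, fun f _ => ?_⟩, ?_⟩
    · have h₀ := OrderedProgram.acceptFrac_nonneg f
      have h₁ := OrderedProgram.acceptFrac_le_one f
      rw [abs_le]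
      constructor <;> linarith
    · rw [Finset.card_empty, Nat.cast_zero]
      positivity
  · obtain ⟨k, hk⟩ : ∃ k, k = ⌊1 / (ε / 4)⌋₊ := ⟨_, rfl⟩
    obtain ⟨t, ht⟩ : ∃ t, t = (k + 1) * ((k + 1) * (2 * (k + 1) * n + 2)) := ⟨_, rfl⟩
    have hex : ∀ m, ∃ H : Finset (List Bool), m ≤ n → H.card ≤ t ∧
        (∀ z ∈ H, z.length = m) ∧ OrderedProgram.Hits H m (2 * (ε / 4)) := by
      intro m
      by_cases hm : m ≤ n
      · obtain ⟨H, hH⟩ := OrderedProgram.exists_hits (by linarith) (by linarith) hk hm ht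
        exact ⟨H, fun _ => hH⟩
      · exact ⟨∅, fun h => absurd h hm⟩
    choose H hH using hex
    let Q : Finset (Fin n → Bool) :=
      Finset.univ.filter fun x => List.ofFn x ∈ OrderedProgram.glued H n
    obtain ⟨g, hg⟩ := OrderedProgram.exists_isSampler (F := permClassSingle n) (Q := Q) (ε := ε)
      fun f hf f' hf' hagree => by
        have := OrderedProgram.acceptFrac_le_of_agree (δ := 2 * (ε / 4)) (by linarith) hn
          (fun i hi => (hH i hi).2.1) (fun i hi => (hH i hi).2.2) hf hf'
          fun x hx => hagree x (Finset.mem_filter.mpr ⟨Finset.mem_univ _, hx⟩)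
        linarith
    refine ⟨Q, g, hg, ?_⟩
    have hQ : Q.card ≤ (OrderedProgram.glued H n).card :=
      Finset.card_le_card_of_injOn List.ofFn (fun x hx => (Finset.mem_filter.mp hx).2)
        fun x _ y _ h => List.ofFn_injective h
    have hQt : (Q.card : ℝ) ≤ n * (3 * t ^ 2) := by
      exact_mod_cast hQ.trans (OrderedProgram.card_glued_le fun i hi => (hH i hi).1)
    have := hQt.trans (OrderedProgram.query_bound_le hn hε hhalf hk ht)
    exact_mod_cast this
end

section
/- Suppose there is a constant C > 0 such that for all n, w ≥ 1 and all ε with 0 < ε < 1, there exists a deterministic nonadaptive ε-sampler (Q, g) for permutation branching programs of length n and width w with query complexity |Q| ≤ (n·w/ε)^C. Then there exists a constant C' > 0 (depending only on C) such that for all n, a ≥ 1 and all ε with 0 < ε < 1, there exists a deterministic nonadaptive ε-sampler (Q', g') for the class of permutation branching programs of length n, arbitrary width, with at most a accept states, with query complexity |Q'| ≤ (n·a/ε)^{C'}. -/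
/-- The probability that a uniformly random bit string of length `k` satisfies `P`. -/
noncomputable def listProb : ℕ → (List Bool → Prop) → ℝ
  | 0, P => open Classical in if P [] then 1 else 0
  | k + 1, P => (listProb k (fun z => P (false :: z)) + listProb k fun z => P (true :: z)) / 2

theorem listProb_nonneg (k : ℕ) (P : List Bool → Prop) : 0 ≤ listProb k P := by
  induction k generalizing P with
  | zero => unfold listProb; split_ifs <;> norm_num
  | succ k ih => unfold listProb; linarith [ih fun z => P (false :: z), ih fun z => P (true :: z)]

theorem listProb_mono {k : ℕ} {P P' : List Bool → Prop} (h : ∀ z, z.length = k → P z → P' z) :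
    listProb k P ≤ listProb k P' := by
  induction k generalizing P P' with
  | zero =>
    have := h [] rfl
    unfold listProb
    split_ifs <;> simp_all
  | succ k ih =>
    have h₀ := ih (P := fun z => P (false :: z)) (P' := fun z => P' (false :: z))
      fun z hz => h _ (by simp [hz])
    have h₁ := ih (P := fun z => P (true :: z)) (P' := fun z => P' (true :: z))
      fun z hz => h _ (by simp [hz])
    unfold listProb
    linarith

theorem listProb_congr {k : ℕ} {P P' : List Bool → Prop}
    (h : ∀ z, z.length = k → (P z ↔ P' z)) : listProb k P = listProb k P' :=
  le_antisymm (listProb_mono fun z hz => (h z hz).1) (listProb_mono fun z hz => (h z hz).2)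

theorem listProb_drop (i k : ℕ) (P : List Bool → Prop) :
    listProb (k + i) (fun z => P (z.drop i)) = listProb k P := by
  induction i with
  | zero => simp
  | succ i ih => rw [← add_assoc, listProb]; simp [ih]

theorem acceptFrac_eq_sum {n : ℕ} (f : (Fin n → Bool) → Bool) :
    acceptFrac f = (∑ x, if f x = true then (1 : ℝ) else 0) / 2 ^ n := by
  simp [acceptFrac]

theorem acceptFrac_eq_listProb {n : ℕ} {f : (Fin n → Bool) → Bool} {P : List Bool → Prop}
    (h : ∀ x, f x = true ↔ P (List.ofFn x)) : acceptFrac f = listProb n P := by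
  induction n generalizing P with
  | zero =>
    have hf : ∀ x, f x = true ↔ P [] := fun x => by rw [h, List.ofFn_zero]
    rw [acceptFrac_eq_sum, listProb]
    by_cases hP : P [] <;> simp [hf, hP]
  | succ n ih =>
    have h₀ := ih (f := fun x => f (Fin.cons false x)) (P := fun z => P (false :: z))
      fun x => by rw [h, List.ofFn_succ]; simp
    have h₁ := ih (f := fun x => f (Fin.cons true x)) (P := fun z => P (true :: z))
      fun x => by rw [h, List.ofFn_succ]; simp
    rw [listProb, ← h₀, ← h₁]
    simp only [acceptFrac_eq_sum]
    rw [← (Fin.consEquiv fun _ => Bool).sum_comp, Fintype.sum_prod_type, Fintype.sum_bool]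
    simp only [Fin.consEquiv, Equiv.coe_fn_mk]
    rw [pow_succ]
    field_simp
    exact add_comm _ _

theorem acceptFrac_nonneg {n : ℕ} (f : (Fin n → Bool) → Bool) : 0 ≤ acceptFrac f := by
  unfold acceptFrac; positivity

theorem acceptFrac_le_one {n : ℕ} (f : (Fin n → Bool) → Bool) : acceptFrac f ≤ 1 := by
  unfold acceptFrac
  rw [div_le_one (by positivity)]
  exact_mod_cast (Finset.card_le_univ _).trans (by simp)

theorem acceptFrac_mono {n : ℕ} {f f' : (Fin n → Bool) → Bool}
    (h : ∀ x, f x = true → f' x = true) : acceptFrac f ≤ acceptFrac f' := by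
  unfold acceptFrac
  have := Finset.card_le_card (Finset.monotone_filter_right Finset.univ fun x _ => h x)
  gcongr

theorem acceptFrac_false {n : ℕ} : acceptFrac (fun _ : Fin n → Bool => false) = 0 := by
  simp [acceptFrac]

/-- The input agreeing with `x` on the first `i` bits and with `y` afterwards. -/
def splice {n : ℕ} (x y : Fin n → Bool) (i : ℕ) (j : Fin n) : Bool :=
  if (j : ℕ) < i then x j else y j

theorem ofFn_splice {n : ℕ} (x y : Fin n → Bool) {i : ℕ} (hi : i ≤ n) :
    List.ofFn (splice x y i) = (List.ofFn x).take i ++ (List.ofFn y).drop i := by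
  apply List.ext_getElem
  · simp [hi]
  · intro j h₁ h₂
    rw [List.getElem_append]
    by_cases hj : j < i
    · simp [splice, hj, hi]
    · have : i + (j - i) = j := by omega
      simp [splice, hj, hi, this]

namespace OBP

variable {n w : ℕ}

theorem walk_append (B : OBP n w) (i : ℕ) (v : Fin w) (z z' : List Bool) :
    B.walk i v (z ++ z') = B.walk (i + z.length) (B.walk i v z) z' := by
  induction z generalizing i v with
  | nil => rfl
  | cons b z ih => simp only [List.cons_append, walk, ih, List.length_cons]; congr 1; omega

theorem IsPerm.walk_injective {B : OBP n w} (hB : B.IsPerm) {i : ℕ} {z : List Bool}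
    (h : i + z.length ≤ n) : Function.Injective fun v => B.walk i v z := by
  induction z generalizing i with
  | nil => exact fun _ _ h => h
  | cons b z ih =>
    rw [List.length_cons] at h
    exact (ih (i := i + 1) (by omega)).comp (hB i (by omega) b).injective

theorem eval_eq_true (B : OBP n w) (x : Fin n → Bool) :
    B.eval x = true ↔ B.walk 0 B.start (List.ofFn x) ∈ B.accept := by
  simp [eval]

/-- The probability of acceptance when starting from state `v` in layer `i` with `k` steps
remaining. -/
noncomputable def acceptProbFrom (B : OBP n w) (i k : ℕ) (v : Fin w) : ℝ :=
  listProb k fun z => B.walk i v z ∈ B.accept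

theorem acceptFrac_eval (B : OBP n w) : acceptFrac B.eval = B.acceptProbFrom 0 n B.start :=
  acceptFrac_eq_listProb fun x => B.eval_eq_true x

theorem acceptProbFrom_zero (B : OBP n w) (i : ℕ) (v : Fin w) :
    B.acceptProbFrom i 0 v = if v ∈ B.accept then 1 else 0 := by
  by_cases h : v ∈ B.accept <;> simp [acceptProbFrom, listProb, walk, h]

theorem acceptProbFrom_succ (B : OBP n w) (i k : ℕ) (v : Fin w) :
    B.acceptProbFrom i (k + 1) v = (B.acceptProbFrom (i + 1) k (B.trans i v false) +
      B.acceptProbFrom (i + 1) k (B.trans i v true)) / 2 := rfl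

theorem IsPerm.sum_acceptProbFrom {B : OBP n w} (hB : B.IsPerm) {i k : ℕ} (h : i + k ≤ n) :
    ∑ v, B.acceptProbFrom i k v = B.accept.card := by
  induction k generalizing i with
  | zero =>
    simp only [acceptProbFrom_zero]
    rw [Finset.sum_boole, Finset.filter_univ_mem]
  | succ k ih =>
    have hb : ∀ b, ∑ v, B.acceptProbFrom (i + 1) k (B.trans i v b) = B.accept.card := fun b => by
      rw [(hB i (by omega) b).sum_comp (B.acceptProbFrom (i + 1) k), ih (by omega)]
    simp only [acceptProbFrom_succ]
    rw [← Finset.sum_div, Finset.sum_add_distrib, hb, hb]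
    ring

/-- The states of layer `i` whose acceptance probability exceeds `δ`. -/
noncomputable def heavySet (B : OBP n w) (δ : ℝ) (i : ℕ) : Finset (Fin w) :=
  Finset.univ.filter fun v => δ < B.acceptProbFrom i (n - i) v

theorem IsPerm.card_heavySet_mul_le {B : OBP n w} (hB : B.IsPerm) (δ : ℝ) {i : ℕ} (hi : i ≤ n) :
    (B.heavySet δ i).card * δ ≤ B.accept.card := by
  rw [← hB.sum_acceptProbFrom (i := i) (k := n - i) (by omega), ← nsmul_eq_mul]
  refine (Finset.card_nsmul_le_sum _ (B.acceptProbFrom i (n - i)) δ fun v hv => ?_).trans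
    (Finset.sum_le_univ_sum_of_nonneg fun v => listProb_nonneg _ _)
  exact (Finset.mem_filter.1 hv).2.le

theorem heavySet_last_subset (B : OBP n w) {δ : ℝ} (hδ : 0 ≤ δ) : B.heavySet δ n ⊆ B.accept := by
  intro v hv
  by_contra h
  have := (Finset.mem_filter.1 hv).2
  simp [acceptProbFrom_zero, h] at this
  linarith

theorem IsPerm.card_hitSet_le {B : OBP n w} (hB : B.IsPerm) (H : Finset (Fin n → Bool)) {i : ℕ}
    (hi : i ≤ n) : (B.hitSet H i).card ≤ H.card * B.accept.card := by
  classical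
  have hsub : B.hitSet H i ⊆ H.biUnion fun y =>
      Finset.univ.filter fun v => B.walk i v ((List.ofFn y).drop i) ∈ B.accept := by
    intro v
    simp [hitSet]
  refine (Finset.card_le_card hsub).trans (Finset.card_biUnion_le_card_mul _ _ _ fun y _ => ?_)
  refine Finset.card_le_card_of_injOn (fun v => B.walk i v ((List.ofFn y).drop i))
    (fun v hv => by simpa using hv) (hB.walk_injective ?_).injOn
  simp; omega

theorem hitSet_last_subset (B : OBP n w) (H : Finset (Fin n → Bool)) :
    B.hitSet H n ⊆ B.accept := by
  intro v
  simp +contextual [hitSet, List.drop_of_length_le, walk]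

/-- Every state visited when reading `z` from state `v` in layer `i` lies in the set that `S`
assigns to its layer. -/
def Stays (B : OBP n w) (S : ℕ → Finset (Fin w)) (i : ℕ) (v : Fin w) (z : List Bool) : Prop :=
  ∀ j ≤ z.length, B.walk i v (z.take j) ∈ S (i + j)

theorem stays_nil (B : OBP n w) (S : ℕ → Finset (Fin w)) (i : ℕ) (v : Fin w) :
    B.Stays S i v [] ↔ v ∈ S i := by
  simp [Stays, walk]

theorem stays_cons (B : OBP n w) (S : ℕ → Finset (Fin w)) (i : ℕ) (v : Fin w) (b : Bool)
    (z : List Bool) :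
    B.Stays S i v (b :: z) ↔ v ∈ S i ∧ B.Stays S (i + 1) (B.trans i v b) z := by
  constructor
  · intro h
    refine ⟨by simpa [walk] using h 0 (by simp), fun j hj => ?_⟩
    have := h (j + 1) (by simpa using hj)
    simpa [walk, add_assoc, add_comm 1 j] using this
  · rintro ⟨h₀, h⟩ j hj
    cases j with
    | zero => simpa [walk] using h₀
    | succ j =>
      have := h j (by simpa using hj)
      simpa [walk, add_assoc, add_comm 1 j] using this

theorem Stays.mem {B : OBP n w} {S : ℕ → Finset (Fin w)} {i : ℕ} {v : Fin w} {z : List Bool}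
    (h : B.Stays S i v z) : v ∈ S i := by
  simpa [walk] using h 0 (by simp)

open Classical in
/-- Accept iff the walk from the start state stays within the sets `S`. -/
noncomputable def stayFun (B : OBP n w) (S : ℕ → Finset (Fin w)) (x : Fin n → Bool) : Bool :=
  decide (B.Stays S 0 B.start (List.ofFn x))

theorem hitFun_eq_stayFun (B : OBP n w) (H : Finset (Fin n → Bool)) :
    B.hitFun H = B.stayFun (B.hitSet H) := by
  funext x
  simp [hitFun, stayFun, Stays]

theorem eval_of_stayFun {B : OBP n w} {S : ℕ → Finset (Fin w)} (hS : S n ⊆ B.accept)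
    {x : Fin n → Bool} (h : B.stayFun S x = true) : B.eval x = true := by
  have h' : B.Stays S 0 B.start (List.ofFn x) := by simpa [stayFun] using h
  rw [eval_eq_true]
  apply hS
  have := h' n (by simp)
  rwa [List.take_of_length_le (by simp), zero_add] at this

theorem acceptProbFrom_le_add (B : OBP n w) {S : ℕ → Finset (Fin w)} {δ : ℝ}
    (hδ : 0 ≤ δ) (hS : ∀ i ≤ n, ∀ v ∉ S i, B.acceptProbFrom i (n - i) v ≤ δ) {i k : ℕ}
    (hik : i + k = n) (v : Fin w) :
    B.acceptProbFrom i k v ≤ δ + listProb k (B.Stays S i v) := by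
  by_cases hv : v ∈ S i
  · induction k generalizing i v with
    | zero =>
      simp only [acceptProbFrom, listProb, stays_nil, hv, if_true]
      split_ifs <;> linarith
    | succ k ih =>
      have hb : ∀ u, B.acceptProbFrom (i + 1) k u ≤ δ + listProb k (B.Stays S (i + 1) u) := by
        intro u
        by_cases hu : u ∈ S (i + 1)
        · exact ih (by omega) u hu
        · have := hS (i + 1) (by omega) u hu
          rw [show n - (i + 1) = k by omega] at this
          linarith [listProb_nonneg k (B.Stays S (i + 1) u)]
      have h₀ := hb (B.trans i v false)
      have h₁ := hb (B.trans i v true)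
      rw [acceptProbFrom_succ, listProb]
      simp only [stays_cons, hv, true_and]
      change _ ≤ δ + (listProb k (B.Stays S (i + 1) _) + listProb k (B.Stays S (i + 1) _)) / 2
      linarith
  · have := hS i (by omega) v hv
    rw [show n - i = k by omega] at this
    linarith [listProb_nonneg k (B.Stays S i v)]

theorem acceptFrac_eval_le_add (B : OBP n w) {S : ℕ → Finset (Fin w)} {δ : ℝ}
    (hδ : 0 ≤ δ) (hS : ∀ i ≤ n, ∀ v ∉ S i, B.acceptProbFrom i (n - i) v ≤ δ) :
    acceptFrac B.eval ≤ δ + acceptFrac (B.stayFun S) := by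
  rw [acceptFrac_eval, acceptFrac_eq_listProb (f := B.stayFun S) (P := B.Stays S 0 B.start)
    fun x => by simp [stayFun]]
  exact B.acceptProbFrom_le_add hδ hS (by omega) _

/-- The program that idles in state `v` up to layer `i` and follows `B` afterwards. -/
def restart (B : OBP n w) (i : ℕ) (v : Fin w) : OBP n w where
  start := v
  trans j u b := if j < i then u else B.trans j u b
  accept := B.accept

theorem IsPerm.restart {B : OBP n w} (hB : B.IsPerm) (i : ℕ) (v : Fin w) :
    (B.restart i v).IsPerm := by
  intro j hj b
  by_cases h : j < i
  · simp [OBP.restart, h]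
  · simpa [OBP.restart, h] using hB j hj b

theorem walk_restart_of_le (B : OBP n w) {i j : ℕ} (h : i ≤ j) (v u : Fin w) (z : List Bool) :
    (B.restart i v).walk j u z = B.walk j u z := by
  induction z generalizing j u with
  | nil => rfl
  | cons b z ih =>
    rw [walk, walk, ih (by omega)]
    simp [restart, h.not_gt]

theorem walk_restart (B : OBP n w) {i j : ℕ} (h : j ≤ i) (v u : Fin w) (z : List Bool) :
    (B.restart i v).walk j u z = B.walk i u (z.drop (i - j)) := by
  induction z generalizing j with
  | nil => simp [walk]
  | cons b z ih =>
    rcases h.eq_or_lt with rfl | h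
    · simp [walk_restart_of_le]
    · rw [walk, show i - j = (i - (j + 1)) + 1 by omega, List.drop_succ_cons, ← ih h]
      simp [restart, h]

theorem acceptFrac_restart (B : OBP n w) {i : ℕ} (hi : i ≤ n) (v : Fin w) :
    acceptFrac (B.restart i v).eval = B.acceptProbFrom i (n - i) v := by
  rw [acceptFrac_eval, acceptProbFrom, acceptProbFrom,
    ← listProb_drop i (n - i), Nat.sub_add_cancel hi]
  refine listProb_congr fun z _ => ?_
  rw [walk_restart _ (Nat.zero_le i)]
  rfl

theorem IsPerm.acceptProbFrom_le_of_notMem_hitSet {B : OBP n w} (hB : B.IsPerm) {a : ℕ}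
    (ha : B.accept.card ≤ a) {H : Finset (Fin n → Bool)} {δ : ℝ}
    (hH : IsHitter (permClassA n a) H δ) {i : ℕ} (hi : i ≤ n) {v : Fin w}
    (hv : v ∉ B.hitSet H i) : B.acceptProbFrom i (n - i) v ≤ δ := by
  by_contra! h
  rw [← acceptFrac_restart B hi] at h
  obtain ⟨y, hy, hyv⟩ := hH _ ⟨w, _, hB.restart i v, ha, rfl⟩ h
  rw [eval_eq_true, walk_restart _ (Nat.zero_le i)] at hyv
  exact hv (Finset.mem_filter.2 ⟨Finset.mem_univ _, y, hy, hyv⟩)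

open Classical in
/-- One step of the compressed program on states `(j, k)`: in layer `i`, a pair with `j = i`
encodes the state `v ∈ S i` with `enc i v = k`, and a pair with `j < i` records that the walk
left the sets `S` after layer `j`. -/
noncomputable def compressStep (B : OBP n w) (S : ℕ → Finset (Fin w)) {M : ℕ}
    (enc : ℕ → Fin w → Fin M) (i : ℕ) (b : Bool) (p : Fin (n + 1) × Fin M) :
    Fin (n + 1) × Fin M :=
  if h : ∃ v ∈ S i, (p.1 : ℕ) = i ∧ enc i v = p.2 ∧ B.trans i v b ∈ S (i + 1) then
    (Fin.ofNat (n + 1) (i + 1), enc (i + 1) (B.trans i h.choose b))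
  else p

section compress

variable {B : OBP n w} {S : ℕ → Finset (Fin w)} {M : ℕ} {enc : ℕ → Fin w → Fin M}

theorem compressStep_of_lt {i : ℕ} (b : Bool) {p : Fin (n + 1) × Fin M} (hp : (p.1 : ℕ) < i) :
    B.compressStep S enc i b p = p := by
  rw [compressStep, dif_neg]
  rintro ⟨v, -, h, -⟩
  omega

theorem compressStep_of_mem {i : ℕ} (henc : Set.InjOn (enc i) (S i)) {b : Bool} {v : Fin w}
    (hv : v ∈ S i) (hb : B.trans i v b ∈ S (i + 1)) {j : Fin (n + 1)} (hj : (j : ℕ) = i) :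
    B.compressStep S enc i b (j, enc i v) =
      (Fin.ofNat (n + 1) (i + 1), enc (i + 1) (B.trans i v b)) := by
  have h : ∃ u ∈ S i, (j : ℕ) = i ∧ enc i u = enc i v ∧ B.trans i u b ∈ S (i + 1) :=
    ⟨v, hv, hj, rfl, hb⟩
  rw [compressStep, dif_pos h, henc h.choose_spec.1 hv h.choose_spec.2.2.1]

theorem compressStep_of_notMem {i : ℕ} (henc : Set.InjOn (enc i) (S i)) {b : Bool} {v : Fin w}
    (hv : v ∈ S i) (hb : B.trans i v b ∉ S (i + 1)) (j : Fin (n + 1)) :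
    B.compressStep S enc i b (j, enc i v) = (j, enc i v) := by
  rw [compressStep, dif_neg]
  rintro ⟨u, hu, -, h, hub⟩
  exact hb (henc hu hv h ▸ hub)

theorem compressStep_injOn (hB : B.IsPerm) (henc : ∀ i ≤ n, Set.InjOn (enc i) (S i)) {i : ℕ}
    (hi : i < n) (b : Bool) :
    Set.InjOn (B.compressStep S enc i b) {p | (p.1 : ℕ) ≤ i} := by
  rintro p hp q hq h
  simp only [Set.mem_ofPred_eq] at hp hq
  have hmod : (i + 1) % (n + 1) = i + 1 := Nat.mod_eq_of_lt (by omega)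
  unfold compressStep at h
  split_ifs at h with h₁ h₂ h₂
  · obtain ⟨hv, hvi, hvp, hvb⟩ := h₁.choose_spec
    obtain ⟨hu, hui, huq, hub⟩ := h₂.choose_spec
    have huv : h₁.choose = h₂.choose :=
      (hB i hi b).injective (henc (i + 1) hi hvb hub (Prod.ext_iff.1 h).2)
    exact Prod.ext (Fin.ext (hvi.trans hui.symm)) (by rw [← hvp, ← huq, huv])
  · rw [← h] at hq
    simp [Fin.ofNat, hmod] at hq
  · rw [h] at hp
    simp [Fin.ofNat, hmod] at hp
  · exact h

end compress

theorem IsPerm.stayFun_mem_permClassW {B : OBP n w} (hB : B.IsPerm) {S : ℕ → Finset (Fin w)}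
    {M : ℕ} (hM : 0 < M) (hS : ∀ i ≤ n, (S i).card ≤ M) :
    B.stayFun S ∈ permClassW n ((n + 1) * M) := by
  classical
  have : Nonempty (Fin M) := ⟨⟨0, hM⟩⟩
  have hex : ∀ i, ∃ e : Fin w → Fin M, i ≤ n → Set.InjOn e (S i) := by
    intro i
    by_cases hi : i ≤ n
    · obtain ⟨e, -, he⟩ := (Set.toFinite (S i : Set (Fin w))).exists_injOn_of_encard_le
        (t := (Set.univ : Set (Fin M))) (by
          simpa [Set.encard_coe_eq_coe_finsetCard, Set.encard_univ] using
            (by exact_mod_cast hS i hi : ((S i).card : ℕ∞) ≤ M))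
      exact ⟨e, fun _ => he⟩
    · exact ⟨fun _ => ⟨0, hM⟩, fun h => absurd h hi⟩
  choose enc henc using hex
  have hperm : ∀ i b, ∃ σ : Equiv.Perm (Fin (n + 1) × Fin M), i < n →
      ∀ p : Fin (n + 1) × Fin M, (p.1 : ℕ) ≤ i → σ p = B.compressStep S enc i b p := by
    intro i b
    by_cases hi : i < n
    · obtain ⟨σ, hσ⟩ := Set.MapsTo.exists_equiv_extend_of_card_eq
        (t := (Finset.univ : Finset (Fin (n + 1) × Fin M))) (by simp)
        (s := {p | (p.1 : ℕ) ≤ i}) (f := B.compressStep S enc i b)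
        (by intro p _; simp) (compressStep_injOn hB henc hi b)
      exact ⟨σ.trans (Equiv.subtypeUnivEquiv Finset.mem_univ), fun _ p hp => hσ p hp⟩
    · exact ⟨Equiv.refl _, fun h => absurd h hi⟩
  choose σ hσ using hperm
  let e : Fin (n + 1) × Fin M ≃ Fin ((n + 1) * M) := finProdFinEquiv
  let B' : OBP n ((n + 1) * M) :=
    { start := e (0, enc 0 B.start)
      trans := fun i v b => e (σ i b (e.symm v))
      accept := Finset.univ.filter fun v =>
        B.start ∈ S 0 ∧ (e.symm v).1 = Fin.last n }
  have hdead : ∀ (z : List Bool) (i : ℕ) (p : Fin (n + 1) × Fin M), i + z.length = n →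
      (p.1 : ℕ) < i → B'.walk i (e p) z = e p := by
    intro z
    induction z with
    | nil => intros; rfl
    | cons b z ih =>
      intro i p hi hp
      rw [List.length_cons] at hi
      have : B'.trans i (e p) b = e p := by
        simp only [B', Equiv.symm_apply_apply]
        rw [hσ i b (by omega) p hp.le, compressStep_of_lt b hp]
      rw [walk, this, ih (i + 1) p (by omega) (by omega)]
  have halive : ∀ (z : List Bool) (i : ℕ) (j : Fin (n + 1)) (v : Fin w), i + z.length = n →
      (j : ℕ) = i → v ∈ S i →
      ((e.symm (B'.walk i (e (j, enc i v)) z)).1 = Fin.last n ↔ B.Stays S i v z) := by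
    intro z
    induction z with
    | nil =>
      intro i j v hi hj hv
      simp only [walk, Equiv.symm_apply_apply, stays_nil, hv, iff_true]
      exact Fin.ext (by simpa [hj] using hi)
    | cons b z ih =>
      intro i j v hi hj hv
      rw [List.length_cons] at hi
      have ht : B'.trans i (e (j, enc i v)) b = e (B.compressStep S enc i b (j, enc i v)) := by
        simp only [B', Equiv.symm_apply_apply]
        rw [hσ i b (by omega) _ (by simp [hj])]
      rw [walk, ht, stays_cons]
      simp only [hv, true_and]
      by_cases hb : B.trans i v b ∈ S (i + 1)
      · rw [compressStep_of_mem (henc i (by omega)) hv hb hj]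
        refine ih (i + 1) _ _ (by omega) ?_ hb
        simpa [Fin.ofNat] using Nat.mod_eq_of_lt (by omega : i + 1 < n + 1)
      · rw [compressStep_of_notMem (henc i (by omega)) hv hb,
          hdead z (i + 1) _ (by omega) (by simp [hj]), Equiv.symm_apply_apply]
        refine iff_of_false (fun h => ?_) fun h => hb h.mem
        have := congrArg Fin.val h
        simp at this
        omega
  refine ⟨B', fun i _ b => (e.symm.trans ((σ i b).trans e)).bijective, ?_⟩
  funext x
  rw [Bool.eq_iff_iff, eval_eq_true]
  have hacc : ∀ v, v ∈ B'.accept ↔ B.start ∈ S 0 ∧ (e.symm v).1 = Fin.last n := by simp [B']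
  rw [hacc]
  simp only [stayFun, decide_eq_true_eq]
  by_cases h₀ : B.start ∈ S 0
  · simp only [h₀, true_and]
    exact (halive (List.ofFn x) 0 0 B.start (by simp) rfl h₀).symm
  · simp only [h₀, false_and, iff_false]
    exact fun h => h₀ h.mem

theorem hitFun_eq_true (B : OBP n w) (H : Finset (Fin n → Bool)) (x : Fin n → Bool) :
    B.hitFun H x = true ↔ ∀ i ≤ n, ∃ y ∈ H, B.eval (splice x y i) = true := by
  simp only [hitFun, hitSet, decide_eq_true_eq, Finset.mem_filter, Finset.mem_univ, true_and]
  refine forall₂_congr fun i hi => exists_congr fun y => and_congr_right fun _ => ?_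
  rw [eval_eq_true, ofFn_splice _ _ hi, walk_append]
  simp [hi]

end OBP

open OBP

/-- A sampler for bounded-width permutation programs queries a hitting set for permutation
programs of unbounded width with at most `a` accept states. -/
theorem IsSampler.isHitter_permClassA {n a M : ℕ} {Q : Finset (Fin n → Bool)}
    {g : ((Fin n → Bool) → Bool) → ℝ} {ε : ℝ} (hε : 0 < ε) (hM : 0 < M) (haM : a / (2 * ε) ≤ M)
    (h : IsSampler (permClassW n ((n + 1) * M)) Q g ε) :
    IsHitter (permClassA n a) Q (4 * ε) := by
  rintro _ ⟨w, B, hB, ha, rfl⟩ hacc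
  by_contra! hQ
  have hS : ∀ i ≤ n, (B.heavySet (2 * ε) i).card ≤ M := by
    intro i hi
    have h₁ := hB.card_heavySet_mul_le (2 * ε) hi
    have h₂ : (B.accept.card : ℝ) ≤ a := by exact_mod_cast ha
    have h₃ : ((B.heavySet (2 * ε) i).card : ℝ) ≤ a / (2 * ε) := by
      rw [le_div_iff₀ (by positivity)]
      linarith
    exact_mod_cast h₃.trans haM
  have hmem := hB.stayFun_mem_permClassW hM hS
  have hzero : (fun _ => false) ∈ permClassW n ((n + 1) * M) :=
    ⟨{ start := ⟨0, by positivity⟩, trans := fun _ v _ => v, accept := ∅ },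
      fun _ _ _ => Function.bijective_id, by funext x; simp [eval]⟩
  have hg := h.1 (B.stayFun (B.heavySet (2 * ε))) (fun _ => false) fun x hx => by
    by_contra hne
    exact hQ x hx (eval_of_stayFun (B.heavySet_last_subset (δ := 2 * ε) (by positivity))
      (by simpa using hne))
  have h₁ := abs_le.1 (h.2 _ hmem)
  have h₂ := abs_le.1 (h.2 _ hzero)
  rw [acceptFrac_false] at h₂
  have h₃ := B.acceptFrac_eval_le_add (S := B.heavySet (2 * ε)) (δ := 2 * ε) (by positivity)
    fun i _ v hv => by simpa [heavySet] using hv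
  linarith [h₁.1, h₂.2]

/-- A hitting set for permutation programs of unbounded width, together with a sampler for
bounded-width permutation programs, yields a sampler for unbounded width. -/
theorem IsHitter.exists_isSampler {n a M : ℕ} {H Q : Finset (Fin n → Bool)}
    {g : ((Fin n → Bool) → Bool) → ℝ} {δ ε : ℝ} (hδ : 0 ≤ δ) (hM : 0 < M) (hHM : H.card * a ≤ M)
    (hH : IsHitter (permClassA n a) H δ) (hQ : IsSampler (permClassW n ((n + 1) * M)) Q g ε) :
    ∃ (Q' : Finset (Fin n → Bool)) (g' : ((Fin n → Bool) → Bool) → ℝ),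
      IsSampler (permClassA n a) Q' g' (ε + δ) ∧ Q'.card ≤ Q.card * (H.card * (n + 1)) := by
  classical
  refine ⟨(Q ×ˢ H ×ˢ Finset.range (n + 1)).image fun t => splice t.1 t.2.1 t.2.2,
    fun f => g fun x => decide (∀ i ≤ n, ∃ y ∈ H, f (splice x y i) = true), ⟨?_, ?_⟩, ?_⟩
  · intro f f' hff'
    refine hQ.1 _ _ fun x hx => ?_
    have : (∀ i ≤ n, ∃ y ∈ H, f (splice x y i) = true) ↔
        ∀ i ≤ n, ∃ y ∈ H, f' (splice x y i) = true :=
      forall₂_congr fun i hi => exists_congr fun y => and_congr_right fun hy => by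
        rw [hff' _ (Finset.mem_image.2 ⟨(x, y, i), by simp [hx, hy]; omega, rfl⟩)]
    simp only [this]
  · rintro _ ⟨w, B, hB, ha, rfl⟩
    have hfun : (fun x => decide (∀ i ≤ n, ∃ y ∈ H, B.eval (splice x y i) = true)) =
        B.hitFun H := by
      funext x
      rw [Bool.eq_iff_iff, hitFun_eq_true, decide_eq_true_eq]
    simp only [hfun]
    rw [hitFun_eq_stayFun]
    have hmem := hB.stayFun_mem_permClassW (S := B.hitSet H) hM fun i hi =>
      (hB.card_hitSet_le H hi).trans ((Nat.mul_le_mul_left _ ha).trans hHM)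
    have h₁ := abs_le.1 (hQ.2 _ hmem)
    have h₂ := B.acceptFrac_eval_le_add (S := B.hitSet H) hδ fun i hi v hv =>
      hB.acceptProbFrom_le_of_notMem_hitSet ha hH hi hv
    have h₃ : acceptFrac (B.stayFun (B.hitSet H)) ≤ acceptFrac B.eval :=
      acceptFrac_mono fun x => eval_of_stayFun (B.hitSet_last_subset H)
    exact abs_le.2 ⟨by linarith [h₁.1], by linarith [h₁.2]⟩
  · refine Finset.card_image_le.trans ?_
    simp [Finset.card_product]

/-- Optimal deterministic nonadaptive samplers for bounded-width permutation branching
programs yield optimal deterministic nonadaptive samplers for unbounded-width permutation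
branching programs with at most `a` accept states. -/
theorem stmt1 (C : ℝ) (hC : 0 < C)
    (hyp : ∀ n w : ℕ, 1 ≤ n → 1 ≤ w → ∀ ε : ℝ, 0 < ε → ε < 1 →
      ∃ (Q : Finset (Fin n → Bool)) (g : ((Fin n → Bool) → Bool) → ℝ),
        IsSampler (permClassW n w) Q g ε ∧ (Q.card : ℝ) ≤ ((n * w : ℝ) / ε) ^ C) :
    ∃ C' : ℝ, 0 < C' ∧ ∀ n a : ℕ, 1 ≤ n → 1 ≤ a → ∀ ε : ℝ, 0 < ε → ε < 1 →
      ∃ (Q' : Finset (Fin n → Bool)) (g' : ((Fin n → Bool) → Bool) → ℝ),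
        IsSampler (permClassA n a) Q' g' ε ∧ (Q'.card : ℝ) ≤ ((n * a : ℝ) / ε) ^ C' := by
  refine ⟨2 + (10 * C + 6) * C + 10 * C, by positivity, fun n a hn ha ε hε hε1 => ?_⟩
  have hn' : (1 : ℝ) ≤ n := by exact_mod_cast hn
  have ha' : (1 : ℝ) ≤ a := by exact_mod_cast ha
  rcases le_or_gt (1 / 2) ε with hhalf | hhalf
  · refine ⟨∅, fun _ => 1 / 2, ⟨fun _ _ _ => rfl, fun f _ => ?_⟩, ?_⟩
    · exact abs_le.2 ⟨by linarith [acceptFrac_le_one f], by linarith [acceptFrac_nonneg f]⟩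
    · simp only [Finset.card_empty, Nat.cast_zero]
      positivity
  set X : ℝ := (n * a : ℝ) / ε with hX
  have hX2 : 2 ≤ X := by
    rw [hX, le_div_iff₀ hε]
    nlinarith
  have hX0 : 0 < X := by linarith
  have hnX : (n : ℝ) / ε ≤ X := by
    rw [hX]; gcongr; nlinarith
  have haX : (a : ℝ) / ε ≤ X := by
    rw [hX]; gcongr; nlinarith
  have hn1X : (n : ℝ) + 1 ≤ X ^ 2 := by
    have : (n : ℝ) ≤ n / ε := by rw [le_div_iff₀ hε]; nlinarith
    nlinarith
  have haX' : (a : ℝ) ≤ X := by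
    have : (a : ℝ) ≤ a / ε := by rw [le_div_iff₀ hε]; nlinarith
    linarith
  obtain ⟨M, hM⟩ : ∃ M : ℕ, M = ⌈(a : ℝ) / (2 * (ε / 8))⌉₊ := ⟨_, rfl⟩
  have hMge : (a : ℝ) / (2 * (ε / 8)) ≤ M := hM ▸ Nat.le_ceil _
  have hM0 : 0 < M := hM ▸ Nat.ceil_pos.2 (by positivity)
  have hMle : (M : ℝ) ≤ X ^ 4 := by
    have h₁ := Nat.ceil_lt_add_one (a := (a : ℝ) / (2 * (ε / 8))) (by positivity)
    rw [← hM, show (a : ℝ) / (2 * (ε / 8)) = 4 * (a / ε) by field_simp; ring] at h₁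
    have h₂ : 8 * X ≤ X ^ 3 * X := by
      gcongr
      calc (8 : ℝ) = 2 ^ 3 := by norm_num
        _ ≤ X ^ 3 := by gcongr
    nlinarith
  obtain ⟨H, g₁, hH, hHcard⟩ := hyp n ((n + 1) * M) hn (Nat.mul_pos n.succ_pos hM0) (ε / 8)
    (by positivity) (by linarith)
  have hHcard' : (H.card : ℝ) ≤ X ^ (10 * C) := by
    rw [Real.rpow_mul hX0.le]
    refine hHcard.trans (Real.rpow_le_rpow (by positivity) ?_ hC.le)
    push_cast
    calc (n * ((n + 1) * M) : ℝ) / (ε / 8) = 2 ^ 3 * (n / ε) * ((n + 1) * M) := by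
          field_simp; ring
      _ ≤ X ^ 3 * X * (X ^ 2 * X ^ 4) := by gcongr
      _ = X ^ (10 : ℝ) := by norm_cast; ring
  have hhit := hH.isHitter_permClassA (by positivity) hM0 hMge
  have hM₂ : ((H.card * a + 1 : ℕ) : ℝ) ≤ X ^ (10 * C) * X ^ 2 := by
    have h1 : 1 ≤ X ^ (10 * C) := Real.one_le_rpow (by linarith) (by positivity)
    push_cast
    calc (H.card * a + 1 : ℝ) ≤ X ^ (10 * C) * X + X ^ (10 * C) * 1 := by
          rw [mul_one]; gcongr
      _ = X ^ (10 * C) * (X + 1) := by ring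
      _ ≤ X ^ (10 * C) * X ^ 2 := by gcongr; nlinarith
  obtain ⟨Q, g₂, hQ, hQcard⟩ := hyp n ((n + 1) * (H.card * a + 1)) hn
    (Nat.mul_pos n.succ_pos (Nat.succ_pos _)) (ε / 2) (by positivity) (by linarith)
  have hQcard' : (Q.card : ℝ) ≤ X ^ ((10 * C + 6) * C) := by
    rw [Real.rpow_mul hX0.le]
    refine hQcard.trans (Real.rpow_le_rpow (by positivity) ?_ hC.le)
    calc (n * ((n + 1) * (H.card * a + 1) : ℕ) : ℝ) / (ε / 2)
        = 2 * (n / ε) * ((n + 1) * ((H.card * a + 1 : ℕ) : ℝ)) := by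
          push_cast; field_simp
      _ ≤ X * X * (X ^ 2 * (X ^ (10 * C) * X ^ 2)) := by gcongr
      _ = X ^ (10 * C) * X ^ 6 := by ring
      _ = X ^ (10 * C + 6) := by rw [Real.rpow_add hX0]; norm_cast
  obtain ⟨Q', g', hs, hcard⟩ :=
    hhit.exists_isSampler (by positivity) (Nat.succ_pos _) (Nat.le_succ _) hQ
  refine ⟨Q', g', ?_, ?_⟩
  · rwa [show ε / 2 + 4 * (ε / 8) = ε by ring] at hs
  · calc (Q'.card : ℝ) ≤ Q.card * (H.card * (n + 1)) := by exact_mod_cast hcard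
      _ ≤ X ^ ((10 * C + 6) * C) * (X ^ (10 * C) * X ^ 2) := by gcongr
      _ = X ^ (2 + (10 * C + 6) * C + 10 * C) := by
        rw [Real.rpow_add hX0, Real.rpow_add hX0]; norm_cast; ring
end
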